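/- For all α, β ∈ (0, π/2), the size-7 family T₇ is not a UPB for any of the six groupings of type 2×2×4 (A:B:CD, A:C:BD, A:D:BC, B:C:AD, B:D:AC, C:D:AB). That is: for each way of merging exactly one pair of the four qubit factors into a ℂ⁴ block, there exists a nonzero product vector for that grouping orthogonal to all seven members of T₇. -/

import Mathlib

/-- The 4-qubit index type. -/
abbrev Q4 : Type := Fin 2 × Fin 2 × Fin 2 × Fin 2

/-- The standard inner product on the 4-qubit space `Q4 → ℂ`. -/
noncomputable def ip (v w : Q4 → ℂ) : ℂ := ∑ x, (starRingEnd ℂ) (v x) * w x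

/-- The 4-qubit product vector `|x,y,z,w⟩`. -/
def pv (x y z w : Fin 2 → ℂ) : Q4 → ℂ := fun p => x p.1 * y p.2.1 * z p.2.2.1 * w p.2.2.2

/-- `|0⟩`. -/
def ket0 : Fin 2 → ℂ := ![1, 0]

/-- `|1⟩`. -/
def ket1 : Fin 2 → ℂ := ![0, 1]

/-- `(cos t, sin t)` as a qubit state. -/
noncomputable def vk (t : ℝ) : Fin 2 → ℂ := ![(Real.cos t : ℂ), (Real.sin t : ℂ)]

/-- `(sin t, −cos t)` as a qubit state, orthogonal to `vk t`. -/
noncomputable def vk' (t : ℝ) : Fin 2 → ℂ := ![(Real.sin t : ℂ), -(Real.cos t : ℂ)]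

/-- The 4-qubit UPB of size 7:
`{|0,0,0,0⟩, |0,a,a,1⟩, |0,a',1,a⟩, |1,0,0,b⟩, |1,a',a,b'⟩, |a,a,1,0⟩, |a',1,a',a'⟩}`. -/
noncomputable def T7 (α β : ℝ) : Fin 7 → Q4 → ℂ :=
  ![pv ket0 ket0 ket0 ket0,
    pv ket0 (vk α) (vk α) ket1,
    pv ket0 (vk' α) ket1 (vk α),
    pv ket1 ket0 ket0 (vk β),
    pv ket1 (vk' α) (vk α) (vk' β),
    pv (vk α) (vk α) ket1 ket0,
    pv (vk' α) ket1 (vk' α) (vk' α)]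

/-- Single-qubit inner product. -/
noncomputable def qd (x a : Fin 2 → ℂ) : ℂ :=
  (starRingEnd ℂ) (x 0) * a 0 + (starRingEnd ℂ) (x 1) * a 1

/-- Inner product of a two-qubit product vector with a two-qubit vector. -/
noncomputable def qd2 (x y : Fin 2 → ℂ) (w : Fin 2 × Fin 2 → ℂ) : ℂ :=
  ∑ p, (starRingEnd ℂ) (x p.1 * y p.2) * w p

lemma exists_perp (u : Fin 3 → (Fin 2 → ℂ) × (Fin 2 → ℂ)) :
    ∃ w : Fin 2 × Fin 2 → ℂ, (∃ i j, w (i, j) ≠ 0) ∧ ∀ i, qd2 (u i).1 (u i).2 w = 0 := by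
  let M : Matrix (Fin 3) (Fin 2 × Fin 2) ℂ :=
    fun i p => (starRingEnd ℂ) ((u i).1 p.1 * (u i).2 p.2)
  have h : LinearMap.ker M.mulVecLin ≠ ⊥ := by
    apply LinearMap.ker_ne_bot_of_finrank_lt
    simp
  obtain ⟨w, hw, hne⟩ := Submodule.exists_mem_ne_zero_of_ne_bot h
  obtain ⟨⟨i, j⟩, hp⟩ := Function.ne_iff.mp hne
  refine ⟨w, ⟨i, j, hp⟩, fun i => ?_⟩
  exact congr_fun (LinearMap.mem_ker.mp hw) i

lemma ip_AB (x y z t a b : Fin 2 → ℂ) (w : Fin 2 × Fin 2 → ℂ) :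
    ip (pv x y z t) (fun p : Q4 => a p.1 * b p.2.1 * w (p.2.2.1, p.2.2.2))
      = qd x a * qd y b * qd2 z t w := by
  simp only [ip, pv, qd, qd2, Fintype.sum_prod_type, Fin.sum_univ_two, map_mul]
  ring

lemma ip_AC (x y z t a b : Fin 2 → ℂ) (w : Fin 2 × Fin 2 → ℂ) :
    ip (pv x y z t) (fun p : Q4 => a p.1 * b p.2.2.1 * w (p.2.1, p.2.2.2))
      = qd x a * qd z b * qd2 y t w := by
  simp only [ip, pv, qd, qd2, Fintype.sum_prod_type, Fin.sum_univ_two, map_mul]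
  ring

lemma ip_AD (x y z t a b : Fin 2 → ℂ) (w : Fin 2 × Fin 2 → ℂ) :
    ip (pv x y z t) (fun p : Q4 => a p.1 * b p.2.2.2 * w (p.2.1, p.2.2.1))
      = qd x a * qd t b * qd2 y z w := by
  simp only [ip, pv, qd, qd2, Fintype.sum_prod_type, Fin.sum_univ_two, map_mul]
  ring

lemma ip_BC (x y z t a b : Fin 2 → ℂ) (w : Fin 2 × Fin 2 → ℂ) :
    ip (pv x y z t) (fun p : Q4 => a p.2.1 * b p.2.2.1 * w (p.1, p.2.2.2))
      = qd y a * qd z b * qd2 x t w := by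
  simp only [ip, pv, qd, qd2, Fintype.sum_prod_type, Fin.sum_univ_two, map_mul]
  ring

lemma ip_BD (x y z t a b : Fin 2 → ℂ) (w : Fin 2 × Fin 2 → ℂ) :
    ip (pv x y z t) (fun p : Q4 => a p.2.1 * b p.2.2.2 * w (p.1, p.2.2.1))
      = qd y a * qd t b * qd2 x z w := by
  simp only [ip, pv, qd, qd2, Fintype.sum_prod_type, Fin.sum_univ_two, map_mul]
  ring

lemma ip_CD (x y z t a b : Fin 2 → ℂ) (w : Fin 2 × Fin 2 → ℂ) :
    ip (pv x y z t) (fun p : Q4 => a p.2.2.1 * b p.2.2.2 * w (p.1, p.2.1))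
      = qd z a * qd t b * qd2 x y w := by
  simp only [ip, pv, qd, qd2, Fintype.sum_prod_type, Fin.sum_univ_two, map_mul]
  ring

lemma qd_perp0 : qd ket0 ket1 = 0 := by
  simp [qd, ket0, ket1, vk, vk', Complex.conj_ofReal, -Complex.ofReal_cos, -Complex.ofReal_sin]

lemma qd_perp1 : qd ket1 ket0 = 0 := by
  simp [qd, ket0, ket1, vk, vk', Complex.conj_ofReal, -Complex.ofReal_cos, -Complex.ofReal_sin]

lemma qd_perp2 (α : ℝ) : qd (vk α) (vk' α) = 0 := by
  simp [qd, ket0, ket1, vk, vk', Complex.conj_ofReal, -Complex.ofReal_cos, -Complex.ofReal_sin]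
  try ring

lemma qd_perp3 (α : ℝ) : qd (vk' α) (vk α) = 0 := by
  simp [qd, ket0, ket1, vk, vk', Complex.conj_ofReal, -Complex.ofReal_cos, -Complex.ofReal_sin]
  try ring

/-- `T₇` is not a UPB for any of the six `2 × 2 × 4` groupings
`A:B:CD`, `A:C:BD`, `A:D:BC`, `B:C:AD`, `B:D:AC`, `C:D:AB`: for each there is a
nonzero product vector of the corresponding form orthogonal to all seven members. -/
theorem stmt8 (α β : ℝ) (hα : α ∈ Set.Ioo 0 (Real.pi / 2))
    (hβ : β ∈ Set.Ioo 0 (Real.pi / 2)) :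
    (∃ (a b : Fin 2 → ℂ) (w : Fin 2 × Fin 2 → ℂ),
      (fun p : Q4 => a p.1 * b p.2.1 * w (p.2.2.1, p.2.2.2)) ≠ 0 ∧
      ∀ t, ip (T7 α β t) (fun p : Q4 => a p.1 * b p.2.1 * w (p.2.2.1, p.2.2.2)) = 0) ∧
    (∃ (a c : Fin 2 → ℂ) (w : Fin 2 × Fin 2 → ℂ),
      (fun p : Q4 => a p.1 * c p.2.2.1 * w (p.2.1, p.2.2.2)) ≠ 0 ∧
      ∀ t, ip (T7 α β t) (fun p : Q4 => a p.1 * c p.2.2.1 * w (p.2.1, p.2.2.2)) = 0) ∧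
    (∃ (a d : Fin 2 → ℂ) (w : Fin 2 × Fin 2 → ℂ),
      (fun p : Q4 => a p.1 * d p.2.2.2 * w (p.2.1, p.2.2.1)) ≠ 0 ∧
      ∀ t, ip (T7 α β t) (fun p : Q4 => a p.1 * d p.2.2.2 * w (p.2.1, p.2.2.1)) = 0) ∧
    (∃ (b c : Fin 2 → ℂ) (w : Fin 2 × Fin 2 → ℂ),
      (fun p : Q4 => b p.2.1 * c p.2.2.1 * w (p.1, p.2.2.2)) ≠ 0 ∧
      ∀ t, ip (T7 α β t) (fun p : Q4 => b p.2.1 * c p.2.2.1 * w (p.1, p.2.2.2)) = 0) ∧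
    (∃ (b d : Fin 2 → ℂ) (w : Fin 2 × Fin 2 → ℂ),
      (fun p : Q4 => b p.2.1 * d p.2.2.2 * w (p.1, p.2.2.1)) ≠ 0 ∧
      ∀ t, ip (T7 α β t) (fun p : Q4 => b p.2.1 * d p.2.2.2 * w (p.1, p.2.2.1)) = 0) ∧
    (∃ (c d : Fin 2 → ℂ) (w : Fin 2 × Fin 2 → ℂ),
      (fun p : Q4 => c p.2.2.1 * d p.2.2.2 * w (p.1, p.2.1)) ≠ 0 ∧
      ∀ t, ip (T7 α β t) (fun p : Q4 => c p.2.2.1 * d p.2.2.2 * w (p.1, p.2.1)) = 0) := by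
  have hc : Real.cos α ≠ 0 :=
    (Real.cos_pos_of_mem_Ioo ⟨by linarith [hα.1, Real.pi_pos], hα.2⟩).ne'
  have hs : Real.sin α ≠ 0 :=
    (Real.sin_pos_of_pos_of_lt_pi hα.1 (by linarith [hα.2, Real.pi_pos])).ne'
  refine ⟨?_, ?_, ?_, ?_, ?_, ?_⟩
  · obtain ⟨w, ⟨i, j, hij⟩, hw⟩ := exists_perp ![((vk α), (vk' β)), (ket1, ket0), ((vk' α), (vk' α))]
    have h0 := hw 0
    have h1 := hw 1
    have h2 := hw 2
    simp at h0 h1 h2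
    refine ⟨ket1, ket1, w, fun h => ?_, fun t => ?_⟩
    · have := congr_fun h (1, 1, i, j)
      simp [ket0, ket1, vk, vk', hij, -Complex.ofReal_cos, -Complex.ofReal_sin, hc, hs] at this
    · fin_cases t <;>
        simp [T7, ip_AB, qd_perp0, qd_perp1, qd_perp2, qd_perp3, h0, h1, h2]
  · obtain ⟨w, ⟨i, j, hij⟩, hw⟩ := exists_perp ![((vk' α), (vk' β)), ((vk α), ket0), (ket1, (vk' α))]
    have h0 := hw 0
    have h1 := hw 1
    have h2 := hw 2
    simp at h0 h1 h2
    refine ⟨ket1, ket1, w, fun h => ?_, fun t => ?_⟩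
    · have := congr_fun h (1, i, 1, j)
      simp [ket0, ket1, vk, vk', hij, -Complex.ofReal_cos, -Complex.ofReal_sin, hc, hs] at this
    · fin_cases t <;>
        simp [T7, ip_AC, qd_perp0, qd_perp1, qd_perp2, qd_perp3, h0, h1, h2]
  · obtain ⟨w, ⟨i, j, hij⟩, hw⟩ := exists_perp ![(ket0, ket0), ((vk' α), (vk α)), (ket1, (vk' α))]
    have h0 := hw 0
    have h1 := hw 1
    have h2 := hw 2
    simp at h0 h1 h2
    refine ⟨ket1, ket1, w, fun h => ?_, fun t => ?_⟩
    · have := congr_fun h (1, i, j, 1)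
      simp [ket0, ket1, vk, vk', hij, -Complex.ofReal_cos, -Complex.ofReal_sin, hc, hs] at this
    · fin_cases t <;>
        simp [T7, ip_AD, qd_perp0, qd_perp1, qd_perp2, qd_perp3, h0, h1, h2]
  · obtain ⟨w, ⟨i, j, hij⟩, hw⟩ := exists_perp ![(ket0, ket1), (ket1, (vk' β)), ((vk' α), (vk' α))]
    have h0 := hw 0
    have h1 := hw 1
    have h2 := hw 2
    simp at h0 h1 h2
    refine ⟨ket1, ket0, w, fun h => ?_, fun t => ?_⟩
    · have := congr_fun h (i, 1, 0, j)
      simp [ket0, ket1, vk, vk', hij, -Complex.ofReal_cos, -Complex.ofReal_sin, hc, hs] at this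
    · fin_cases t <;>
        simp [T7, ip_BC, qd_perp0, qd_perp1, qd_perp2, qd_perp3, h0, h1, h2]
  · obtain ⟨w, ⟨i, j, hij⟩, hw⟩ := exists_perp ![(ket0, (vk α)), (ket1, ket0), ((vk' α), (vk' α))]
    have h0 := hw 0
    have h1 := hw 1
    have h2 := hw 2
    simp at h0 h1 h2
    refine ⟨vk α, ket1, w, fun h => ?_, fun t => ?_⟩
    · have := congr_fun h (i, 0, j, 1)
      simp [ket0, ket1, vk, vk', hij, -Complex.ofReal_cos, -Complex.ofReal_sin, hc, hs] at this
    · fin_cases t <;>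
        simp [T7, ip_BD, qd_perp0, qd_perp1, qd_perp2, qd_perp3, h0, h1, h2]
  · obtain ⟨w, ⟨i, j, hij⟩, hw⟩ := exists_perp ![(ket0, (vk' α)), (ket1, ket0), ((vk' α), ket1)]
    have h0 := hw 0
    have h1 := hw 1
    have h2 := hw 2
    simp at h0 h1 h2
    refine ⟨vk' α, ket1, w, fun h => ?_, fun t => ?_⟩
    · have := congr_fun h (i, j, 0, 1)
      simp [ket0, ket1, vk, vk', hij, -Complex.ofReal_cos, -Complex.ofReal_sin, hc, hs] at this
    · fin_cases t <;>
        simp [T7, ip_CD, qd_perp0, qd_perp1, qd_perp2, qd_perp3, h0, h1, h2]
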